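/- If S | R1 ~ S | R2 and S ▷ Ri for i = 1, 2, then R1 ≡D R2. -/

import Mathlib

namespace CCS

/-- Process terms over a set of actions `A`. -/
inductive Proc (A : Type) where
  | nil : Proc A
  | pre : A → Proc A → Proc A
  | par : Proc A → Proc A → Proc A
  | repl : A → Proc A → Proc A

namespace Proc

/-- Finite processes: no occurrence of replication. -/
def IsFin {A : Type} : Proc A → Prop
  | nil => True
  | pre _ p => IsFin p
  | par p q => IsFin p ∧ IsFin q
  | repl _ _ => False

/-- Processes of the calculus: replication is applied only to prefixed
finite processes, at top level. -/
def Wf {A : Type} : Proc A → Prop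
  | nil => True
  | pre _ p => IsFin p
  | par p q => Wf p ∧ Wf q
  | repl _ p => IsFin p

/-- Size: the number of prefixes. -/
def size {A : Type} : Proc A → ℕ
  | nil => 0
  | pre _ p => size p + 1
  | par p q => size p + size q
  | repl _ p => size p + 1

/-- `reps n p` is the parallel composition of `n` copies of `p`. -/
def reps {A : Type} : ℕ → Proc A → Proc A
  | 0, _ => nil
  | n+1, p => par p (reps n p)

/-- `bang F` is `!F`: for `F = α₁.F₁ | ... | αk.Fk` it is `!α₁.F₁ | ... | !αk.Fk`. -/
def bang {A : Type} : Proc A → Proc A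
  | nil => nil
  | pre a p => repl a p
  | par p q => par (bang p) (bang q)
  | repl a p => repl a p

end Proc

/-- The labelled transition system (no synchronisation). -/
inductive Step {A : Type} : Proc A → A → Proc A → Prop where
  | pre {a : A} {p : Proc A} : Step (Proc.pre a p) a p
  | repl {a : A} {p : Proc A} :
      Step (Proc.repl a p) a (Proc.par (Proc.repl a p) p)
  | parL {p : Proc A} {a : A} {p' : Proc A} (q : Proc A) :
      Step p a p' → Step (Proc.par p q) a (Proc.par p' q)
  | parR {q : Proc A} {a : A} {q' : Proc A} (p : Proc A) :
      Step q a q' → Step (Proc.par p q) a (Proc.par p q')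

/-- Strong bisimulations. -/
def IsBisim {A : Type} (R : Proc A → Proc A → Prop) : Prop :=
  Symmetric R ∧
    ∀ p q, R p q → ∀ a p', Step p a p' → ∃ q', Step q a q' ∧ R p' q'

/-- Strong bisimilarity `~`: the greatest strong bisimulation. -/
def Bisim {A : Type} (p q : Proc A) : Prop :=
  ∃ R, IsBisim R ∧ R p q

/-- The congruence `≡D`: the smallest congruence generated by the abelian
monoid laws for parallel composition (neutral element `0`) and the
distribution law `α.(F | α.F | ... | α.F) = α.F | α.F | ... | α.F`
(with as many occurrences of `F` on both sides). -/
inductive EqD {A : Type} : Proc A → Proc A → Prop where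
  | refl (p : Proc A) : EqD p p
  | symm {p q : Proc A} : EqD p q → EqD q p
  | trans {p q r : Proc A} : EqD p q → EqD q r → EqD p r
  | parComm (p q : Proc A) : EqD (Proc.par p q) (Proc.par q p)
  | parAssoc (p q r : Proc A) :
      EqD (Proc.par (Proc.par p q) r) (Proc.par p (Proc.par q r))
  | parNil (p : Proc A) : EqD (Proc.par p Proc.nil) p
  | distr (a : A) (F : Proc A) (n : ℕ) (hF : F.IsFin) :
      EqD (Proc.pre a (Proc.par F (Proc.reps n (Proc.pre a F))))
          (Proc.reps (n + 1) (Proc.pre a F))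
  | congPre (a : A) {p q : Proc A} : EqD p q → EqD (Proc.pre a p) (Proc.pre a q)
  | congPar {p p' q q' : Proc A} :
      EqD p p' → EqD q q' → EqD (Proc.par p q) (Proc.par p' q')
  | congRepl (a : A) {p q : Proc A} : EqD p q → EqD (Proc.repl a p) (Proc.repl a q)

/-- Finite (single-hole) contexts `D ::= [] | α.D | D|F`. -/
inductive FCtx (A : Type) where
  | hole : FCtx A
  | pre : A → FCtx A → FCtx A
  | par : FCtx A → Proc A → FCtx A

/-- Filling the hole of a finite context. -/
def FCtx.fill {A : Type} : FCtx A → Proc A → Proc A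
  | .hole, p => p
  | .pre a d, p => Proc.pre a (d.fill p)
  | .par d f, p => Proc.par (d.fill p) f

/-- Well-formedness of a finite context: the processes placed in parallel
are finite. -/
def FCtx.Wf {A : Type} : FCtx A → Prop
  | .hole => True
  | .pre _ d => d.Wf
  | .par d f => d.Wf ∧ f.IsFin

/-- Single-hole contexts `C ::= D | !α.D | C|P` (the hole never occurs
directly under a replication). -/
inductive Ctx (A : Type) where
  | ofD : FCtx A → Ctx A
  | repl : A → FCtx A → Ctx A
  | par : Ctx A → Proc A → Ctx A

/-- Filling the hole of a context. -/
def Ctx.fill {A : Type} : Ctx A → Proc A → Proc A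
  | .ofD d, p => d.fill p
  | .repl a d, p => Proc.repl a (d.fill p)
  | .par c q, p => Proc.par (c.fill p) q

/-- Well-formedness of a context. -/
def Ctx.Wf {A : Type} : Ctx A → Prop
  | .ofD d => d.Wf
  | .repl _ d => d.Wf
  | .par c p => c.Wf ∧ p.Wf

/-- `k` consecutive transitions. -/
inductive NSteps {A : Type} : Proc A → ℕ → Proc A → Prop where
  | zero (p : Proc A) : NSteps p 0 p
  | succ {p : Proc A} {a : A} {p' : Proc A} {k : ℕ} {q : Proc A} :
      Step p a p' → NSteps p' k q → NSteps p (k + 1) q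

/-- `P ⇒k Q`: `k` transitions from `P` reach a process `≡D Q`. -/
def Reduct {A : Type} (p : Proc A) (k : ℕ) (q : Proc A) : Prop :=
  ∃ p', NSteps p k p' ∧ EqD p' q

/-- `TopRepl S a G` holds when `!a.G` is one of the (top-level) replicated
parallel components of `S`. -/
inductive TopRepl {A : Type} : Proc A → A → Proc A → Prop where
  | repl (a : A) (p : Proc A) : TopRepl (Proc.repl a p) a p
  | parL {p : Proc A} {a : A} {r : Proc A} (q : Proc A) :
      TopRepl p a r → TopRepl (Proc.par p q) a r
  | parR {q : Proc A} {a : A} {r : Proc A} (p : Proc A) :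
      TopRepl q a r → TopRepl (Proc.par p q) a r

/-- `S` has only replicated components: `S = ∏i !αi.Si`. -/
def ReplOnly {A : Type} : Proc A → Prop
  | .nil => True
  | .pre _ _ => False
  | .par p q => ReplOnly p ∧ ReplOnly q
  | .repl _ p => p.IsFin

/-- `S ⫫ F` : for no component `!αi.Si` of `S` and no `k` do we have
`F ⇒k αi.Si`. -/
def Dis {A : Type} (S F : Proc A) : Prop :=
  ∀ a G, TopRepl S a G → ∀ k, ¬ Reduct F k (Proc.pre a G)

/-- `S ▷ R` : there is `k > 0` with `S ⇒k S | R`. -/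
def Purg {A : Type} (S R : Proc A) : Prop :=
  ∃ k, 0 < k ∧ Reduct S k (Proc.par S R)

/-- A process is a seed if no (well-formed) process of strictly smaller
size is bisimilar to it. -/
def IsSeed {A : Type} (p : Proc A) : Prop :=
  p.Wf ∧ ∀ q : Proc A, q.Wf → Bisim q p → p.size ≤ q.size

/-- The rewriting relation `⤳_T` (first argument), defined modulo `≡D` by
the axioms (B1) `C[α.F] ⤳_{!α.F|F'} C[0]` and (B2) `!α.F | !α.F | P ⤳_Q !α.F | P`. -/
inductive Rw {A : Type} : Proc A → Proc A → Proc A → Prop where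
  | B1 {a : A} {F F' : Proc A} (C : Ctx A) :
      F.IsFin → F'.Wf → C.Wf →
      Rw (Proc.par (Proc.repl a F) F') (C.fill (Proc.pre a F)) (C.fill Proc.nil)
  | B2 {a : A} {F P Q : Proc A} :
      F.IsFin → P.Wf → Q.Wf →
      Rw Q (Proc.par (Proc.repl a F) (Proc.par (Proc.repl a F) P))
           (Proc.par (Proc.repl a F) P)
  | eqD {T T' P P' Q Q' : Proc A} :
      EqD T T' → EqD P P' → Rw T' P' Q' → EqD Q Q' → Rw T P Q

/-- `⤳*_T` : the reflexive transitive closure of `⤳_T`. -/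
def RwStar {A : Type} (T : Proc A) : Proc A → Proc A → Prop :=
  Relation.ReflTransGen (Rw T)

/-- Convertibility `P ⋈ Q`: some process `T` satisfies `P ⤳*_T T` and `Q ⤳*_T T`. -/
def Convert {A : Type} (P Q : Proc A) : Prop :=
  ∃ T : Proc A, T.Wf ∧ RwStar T P T ∧ RwStar T Q T

/-- `∏i αi.Fi` for a list of prefixed components. -/
def prodPre {A : Type} (l : List (A × Proc A)) : Proc A :=
  (l.map fun x => Proc.pre x.1 x.2).foldr Proc.par Proc.nil

/-- `∏i !αi.Fi` for a list of prefixed components. -/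
def bangProd {A : Type} (l : List (A × Proc A)) : Proc A :=
  (l.map fun x => Proc.repl x.1 x.2).foldr Proc.par Proc.nil

end CCS

namespace CCS

/-! ### Bisimilarity: basic facts -/

theorem Bisim.coind {A : Type} (R : Proc A → Proc A → Prop)
    (h1 : ∀ p q, R p q → ∀ a p', Step p a p' → ∃ q', Step q a q' ∧ R p' q')
    (h2 : ∀ p q, R p q → ∀ a q', Step q a q' → ∃ p', Step p a p' ∧ R p' q')
    {p q : Proc A} (h : R p q) : Bisim p q := by
  refine ⟨fun x y => R x y ∨ R y x, ⟨?_, ?_⟩, Or.inl h⟩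
  · intro x y hxy
    exact hxy.symm
  · rintro x y (hxy | hxy) a x' hs
    · obtain ⟨y', hy, hr⟩ := h1 x y hxy a x' hs
      exact ⟨y', hy, Or.inl hr⟩
    · obtain ⟨y', hy, hr⟩ := h2 y x hxy a x' hs
      exact ⟨y', hy, Or.inr hr⟩

theorem Bisim.refl {A : Type} (p : Proc A) : Bisim p p :=
  Bisim.coind (fun x y => x = y)
    (by rintro p _ rfl a p' h; exact ⟨p', h, rfl⟩)
    (by rintro p _ rfl a p' h; exact ⟨p', h, rfl⟩) rfl

theorem Bisim.symm {A : Type} {p q : Proc A} (h : Bisim p q) : Bisim q p := by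
  obtain ⟨R, hR, h⟩ := h
  exact ⟨R, hR, hR.1 h⟩

theorem Bisim.fwd {A : Type} {p q : Proc A} (h : Bisim p q) {a : A} {p' : Proc A}
    (hs : Step p a p') : ∃ q', Step q a q' ∧ Bisim p' q' := by
  obtain ⟨R, hR, h⟩ := h
  obtain ⟨q', h1, h2⟩ := hR.2 p q h a p' hs
  exact ⟨q', h1, R, hR, h2⟩

theorem Bisim.bwd {A : Type} {p q : Proc A} (h : Bisim p q) {a : A} {q' : Proc A}
    (hs : Step q a q') : ∃ p', Step p a p' ∧ Bisim p' q' := by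
  obtain ⟨p', h1, h2⟩ := h.symm.fwd hs
  exact ⟨p', h1, h2.symm⟩

theorem Bisim.trans {A : Type} {p q r : Proc A} (h : Bisim p q) (h' : Bisim q r) :
    Bisim p r := by
  refine Bisim.coind (fun x z => ∃ y, Bisim x y ∧ Bisim y z) ?_ ?_ ⟨q, h, h'⟩
  · rintro x z ⟨y, h1, h2⟩ a x' hs
    obtain ⟨y', hy, h1'⟩ := h1.fwd hs
    obtain ⟨z', hz, h2'⟩ := h2.fwd hy
    exact ⟨z', hz, y', h1', h2'⟩
  · rintro x z ⟨y, h1, h2⟩ a z' hs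
    obtain ⟨y', hy, h1'⟩ := h2.bwd hs
    obtain ⟨x', hz, h2'⟩ := h1.bwd hy
    exact ⟨x', hz, y', h2', h1'⟩

theorem Bisim.par {A : Type} {p q r s : Proc A} (h : Bisim p q) (h' : Bisim r s) :
    Bisim (Proc.par p r) (Proc.par q s) := by
  refine Bisim.coind (fun x z => ∃ p q r s, x = Proc.par p r ∧ z = Proc.par q s ∧
    Bisim p q ∧ Bisim r s) ?_ ?_ ⟨p, q, r, s, rfl, rfl, h, h'⟩
  · rintro _ _ ⟨p, q, r, s, rfl, rfl, h1, h2⟩ a x' hs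
    cases hs with
    | parL _ hs =>
      obtain ⟨q', hq, hb⟩ := h1.fwd hs
      exact ⟨_, Step.parL _ hq, _, _, _, _, rfl, rfl, hb, h2⟩
    | parR _ hs =>
      obtain ⟨q', hq, hb⟩ := h2.fwd hs
      exact ⟨_, Step.parR _ hq, _, _, _, _, rfl, rfl, h1, hb⟩
  · rintro _ _ ⟨p, q, r, s, rfl, rfl, h1, h2⟩ a x' hs
    cases hs with
    | parL _ hs =>
      obtain ⟨q', hq, hb⟩ := h1.bwd hs
      exact ⟨_, Step.parL _ hq, _, _, _, _, rfl, rfl, hb, h2⟩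
    | parR _ hs =>
      obtain ⟨q', hq, hb⟩ := h2.bwd hs
      exact ⟨_, Step.parR _ hq, _, _, _, _, rfl, rfl, h1, hb⟩

theorem Bisim.comm {A : Type} (p q : Proc A) : Bisim (Proc.par p q) (Proc.par q p) := by
  refine Bisim.coind (fun x z => ∃ p q, x = Proc.par p q ∧ z = Proc.par q p)
    ?_ ?_ ⟨p, q, rfl, rfl⟩
  · rintro _ _ ⟨p, q, rfl, rfl⟩ a x' hs
    cases hs with
    | parL _ hs => exact ⟨_, Step.parR _ hs, _, _, rfl, rfl⟩
    | parR _ hs => exact ⟨_, Step.parL _ hs, _, _, rfl, rfl⟩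
  · rintro _ _ ⟨p, q, rfl, rfl⟩ a x' hs
    cases hs with
    | parL _ hs => exact ⟨_, Step.parR _ hs, _, _, rfl, rfl⟩
    | parR _ hs => exact ⟨_, Step.parL _ hs, _, _, rfl, rfl⟩

theorem Bisim.assoc {A : Type} (p q r : Proc A) :
    Bisim (Proc.par (Proc.par p q) r) (Proc.par p (Proc.par q r)) := by
  refine Bisim.coind (fun x z => ∃ p q r, x = Proc.par (Proc.par p q) r ∧
    z = Proc.par p (Proc.par q r)) ?_ ?_ ⟨p, q, r, rfl, rfl⟩
  · rintro _ _ ⟨p, q, r, rfl, rfl⟩ a x' hs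
    cases hs with
    | parL _ hs =>
      cases hs with
      | parL _ hs => exact ⟨_, Step.parL _ hs, _, _, _, rfl, rfl⟩
      | parR _ hs => exact ⟨_, Step.parR _ (Step.parL _ hs), _, _, _, rfl, rfl⟩
    | parR _ hs => exact ⟨_, Step.parR _ (Step.parR _ hs), _, _, _, rfl, rfl⟩
  · rintro _ _ ⟨p, q, r, rfl, rfl⟩ a x' hs
    cases hs with
    | parL _ hs => exact ⟨_, Step.parL _ (Step.parL _ hs), _, _, _, rfl, rfl⟩
    | parR _ hs =>
      cases hs with
      | parL _ hs => exact ⟨_, Step.parL _ (Step.parR _ hs), _, _, _, rfl, rfl⟩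
      | parR _ hs => exact ⟨_, Step.parR _ hs, _, _, _, rfl, rfl⟩

theorem Bisim.parNil {A : Type} (p : Proc A) : Bisim (Proc.par p Proc.nil) p := by
  refine Bisim.coind (fun x z => x = Proc.par z Proc.nil) ?_ ?_ rfl
  · rintro _ p rfl a x' hs
    cases hs with
    | parL _ hs => exact ⟨_, hs, rfl⟩
    | parR _ hs => cases hs
  · rintro _ p rfl a x' hs
    exact ⟨_, Step.parL _ hs, rfl⟩

/-! ### The quotient by bisimilarity -/

def bisimSetoid (A : Type) : Setoid (Proc A) where
  r := Bisim
  iseqv := ⟨Bisim.refl, Bisim.symm, Bisim.trans⟩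

/-- Processes modulo bisimilarity. -/
def BP (A : Type) : Type := Quotient (bisimSetoid A)

def mk {A : Type} (p : Proc A) : BP A := Quotient.mk (bisimSetoid A) p

theorem mk_eq {A : Type} {p q : Proc A} : mk p = mk q ↔ Bisim p q :=
  ⟨fun h => Quotient.exact h, fun h => Quotient.sound h⟩

theorem mk_surj {A : Type} (x : BP A) : ∃ p, mk p = x := Quotient.exists_rep x

def BP.add {A : Type} (x y : BP A) : BP A :=
  Quotient.liftOn₂ x y (fun p q => mk (Proc.par p q))
    (fun _ _ _ _ h1 h2 => mk_eq.2 (Bisim.par h1 h2))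

instance instBPAdd {A : Type} : Add (BP A) := ⟨BP.add⟩

instance instBPZero {A : Type} : Zero (BP A) := ⟨mk Proc.nil⟩

instance instBPMonoid {A : Type} : AddCommMonoid (BP A) where
  add_assoc x y z := by
    obtain ⟨p, rfl⟩ := mk_surj x
    obtain ⟨q, rfl⟩ := mk_surj y
    obtain ⟨r, rfl⟩ := mk_surj z
    exact mk_eq.2 (Bisim.assoc p q r)
  zero_add x := by
    obtain ⟨p, rfl⟩ := mk_surj x
    exact mk_eq.2 ((Bisim.comm _ _).trans (Bisim.parNil p))
  add_zero x := by
    obtain ⟨p, rfl⟩ := mk_surj x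
    exact mk_eq.2 (Bisim.parNil p)
  add_comm x y := by
    obtain ⟨p, rfl⟩ := mk_surj x
    obtain ⟨q, rfl⟩ := mk_surj y
    exact mk_eq.2 (Bisim.comm p q)
  nsmul := nsmulRec

theorem mk_par {A : Type} (p q : Proc A) : mk (Proc.par p q) = mk p + mk q := rfl

theorem mk_nil {A : Type} : mk (Proc.nil : Proc A) = 0 := rfl

/-- Transitions on the quotient. -/
def BStep {A : Type} (x : BP A) (a : A) (y : BP A) : Prop :=
  ∃ p p', mk p = x ∧ mk p' = y ∧ Step p a p'

theorem BStep.of {A : Type} {p p' : Proc A} {a : A} (h : Step p a p') :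
    BStep (mk p) a (mk p') := ⟨p, p', rfl, rfl, h⟩

theorem bstep_mk {A : Type} {p : Proc A} {a : A} {y : BP A} :
    BStep (mk p) a y ↔ ∃ p', Step p a p' ∧ mk p' = y := by
  constructor
  · rintro ⟨q, q', h1, rfl, hs⟩
    obtain ⟨p', hp, hb⟩ := (mk_eq.1 h1).fwd hs
    exact ⟨p', hp, mk_eq.2 hb.symm⟩
  · rintro ⟨p', hs, rfl⟩
    exact BStep.of hs

theorem BP.coind {A : Type} (R : BP A → BP A → Prop)
    (h1 : ∀ x y, R x y → ∀ a x', BStep x a x' → ∃ y', BStep y a y' ∧ (R x' y' ∨ x' = y'))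
    (h2 : ∀ x y, R x y → ∀ a y', BStep y a y' → ∃ x', BStep x a x' ∧ (R x' y' ∨ x' = y'))
    {x y : BP A} (h : R x y) : x = y := by
  obtain ⟨p, rfl⟩ := mk_surj x
  obtain ⟨q, rfl⟩ := mk_surj y
  refine mk_eq.2 (Bisim.coind (fun p q => R (mk p) (mk q) ∨ mk p = mk q) ?_ ?_ (Or.inl h))
  · rintro p q (h | h) a p' hs
    · obtain ⟨y', hy, hr⟩ := h1 _ _ h a _ (BStep.of hs)
      obtain ⟨q', hq, rfl⟩ := bstep_mk.1 hy
      exact ⟨q', hq, hr⟩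
    · obtain ⟨q', hq, hb⟩ := (mk_eq.1 h).fwd hs
      exact ⟨q', hq, Or.inr (mk_eq.2 hb)⟩
  · rintro p q (h | h) a p' hs
    · obtain ⟨y', hy, hr⟩ := h2 _ _ h a _ (BStep.of hs)
      obtain ⟨q', hq, rfl⟩ := bstep_mk.1 hy
      exact ⟨q', hq, hr⟩
    · obtain ⟨q', hq, hb⟩ := (mk_eq.1 h).bwd hs
      exact ⟨q', hq, Or.inr (mk_eq.2 hb)⟩

theorem BP.ext_step {A : Type} {x y : BP A} (h : ∀ a z, BStep x a z ↔ BStep y a z) : x = y :=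
  BP.coind (fun u v => u = x ∧ v = y)
    (by rintro _ _ ⟨rfl, rfl⟩ a x' hs; exact ⟨x', (h _ _).1 hs, Or.inr rfl⟩)
    (by rintro _ _ ⟨rfl, rfl⟩ a x' hs; exact ⟨x', (h _ _).2 hs, Or.inr rfl⟩) ⟨rfl, rfl⟩

theorem bstep_zero {A : Type} {a : A} {y : BP A} : ¬ BStep 0 a y := by
  intro h
  obtain ⟨p', hs, _⟩ := (bstep_mk (p := Proc.nil)).1 h
  cases hs

theorem bstep_add {A : Type} {x y z : BP A} {a : A} :
    BStep (x + y) a z ↔ (∃ x', BStep x a x' ∧ z = x' + y) ∨ (∃ y', BStep y a y' ∧ z = x + y') := by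
  obtain ⟨p, rfl⟩ := mk_surj x
  obtain ⟨q, rfl⟩ := mk_surj y
  rw [← mk_par, bstep_mk]
  constructor
  · rintro ⟨r, hs, rfl⟩
    cases hs with
    | parL _ hs => exact Or.inl ⟨_, BStep.of hs, rfl⟩
    | parR _ hs => exact Or.inr ⟨_, BStep.of hs, rfl⟩
  · rintro (⟨x', hs, rfl⟩ | ⟨y', hs, rfl⟩)
    · obtain ⟨p', hp, rfl⟩ := bstep_mk.1 hs
      exact ⟨_, Step.parL _ hp, rfl⟩
    · obtain ⟨p', hp, rfl⟩ := bstep_mk.1 hs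
      exact ⟨_, Step.parR _ hp, rfl⟩

theorem BStep.left {A : Type} {x x' : BP A} {a : A} (h : BStep x a x') (y : BP A) :
    BStep (x + y) a (x' + y) := bstep_add.2 (Or.inl ⟨_, h, rfl⟩)

theorem BStep.right {A : Type} {y y' : BP A} {a : A} (h : BStep y a y') (x : BP A) :
    BStep (x + y) a (x + y') := bstep_add.2 (Or.inr ⟨_, h, rfl⟩)

theorem bstep_mk_pre {A : Type} {a b : A} {p : Proc A} {y : BP A} :
    BStep (mk (Proc.pre a p)) b y ↔ b = a ∧ y = mk p := by
  rw [bstep_mk]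
  constructor
  · rintro ⟨r, hs, rfl⟩
    cases hs
    exact ⟨rfl, rfl⟩
  · rintro ⟨rfl, rfl⟩
    exact ⟨_, Step.pre, rfl⟩

theorem bstep_mk_repl {A : Type} {a b : A} {p : Proc A} {y : BP A} :
    BStep (mk (Proc.repl a p)) b y ↔ b = a ∧ y = mk (Proc.repl a p) + mk p := by
  rw [bstep_mk]
  constructor
  · rintro ⟨r, hs, rfl⟩
    cases hs
    exact ⟨rfl, rfl⟩
  · rintro ⟨rfl, rfl⟩
    exact ⟨_, Step.repl, rfl⟩

theorem mk_pre_congr {A : Type} (a : A) {p q : Proc A} (h : mk p = mk q) :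
    mk (Proc.pre a p) = mk (Proc.pre a q) :=
  BP.ext_step (fun b z => by rw [bstep_mk_pre, bstep_mk_pre, h])

theorem mk_repl_congr {A : Type} (a : A) {p q : Proc A} (h : mk p = mk q) :
    mk (Proc.repl a p) = mk (Proc.repl a q) := by
  have key : ∀ w : BP A, mk (Proc.repl a p) + w = mk (Proc.repl a q) + w := by
    intro w
    refine BP.coind (fun x y => ∃ w, x = mk (Proc.repl a p) + w ∧ y = mk (Proc.repl a q) + w)
      ?_ ?_ ⟨w, rfl, rfl⟩
    · rintro _ _ ⟨w, rfl, rfl⟩ b x' hs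
      rcases bstep_add.1 hs with ⟨u, hu, rfl⟩ | ⟨u, hu, rfl⟩
      · obtain ⟨rfl, rfl⟩ := bstep_mk_repl.1 hu
        exact ⟨_, (bstep_mk_repl.2 ⟨rfl, rfl⟩ : BStep _ b _).left w, Or.inl
          ⟨mk p + w, by rw [add_assoc], by rw [h, add_assoc]⟩⟩
      · exact ⟨_, hu.right _, Or.inl ⟨u, rfl, rfl⟩⟩
    · rintro _ _ ⟨w, rfl, rfl⟩ b x' hs
      rcases bstep_add.1 hs with ⟨u, hu, rfl⟩ | ⟨u, hu, rfl⟩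
      · obtain ⟨rfl, rfl⟩ := bstep_mk_repl.1 hu
        exact ⟨_, (bstep_mk_repl.2 ⟨rfl, rfl⟩ : BStep _ b _).left w, Or.inl
          ⟨mk p + w, by rw [add_assoc], by rw [h, add_assoc]⟩⟩
      · exact ⟨_, hu.right _, Or.inl ⟨u, rfl, rfl⟩⟩
  simpa using key 0

/-- Prefixing on the quotient. -/
def bpre {A : Type} (a : A) (x : BP A) : BP A :=
  Quotient.liftOn x (fun p => mk (Proc.pre a p)) (fun _ _ h => mk_pre_congr a (mk_eq.2 h))

theorem mk_pre {A : Type} (a : A) (p : Proc A) : mk (Proc.pre a p) = bpre a (mk p) := rfl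

theorem bstep_bpre {A : Type} {a b : A} {x y : BP A} :
    BStep (bpre a x) b y ↔ b = a ∧ y = x := by
  obtain ⟨p, rfl⟩ := mk_surj x
  exact bstep_mk_pre

theorem bpre_inj {A : Type} {a b : A} {x y : BP A} (h : bpre a x = bpre b y) :
    a = b ∧ x = y := by
  have : BStep (bpre b y) a x := h ▸ bstep_bpre.2 ⟨rfl, rfl⟩
  exact bstep_bpre.1 this

theorem mk_reps {A : Type} (n : ℕ) (p : Proc A) : mk (Proc.reps n p) = n • mk p := by
  induction n with
  | zero => rw [zero_nsmul]; rfl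
  | succ n ih => rw [Proc.reps, mk_par, ih, succ_nsmul, add_comm]

theorem bpre_distr {A : Type} (a : A) (x : BP A) (n : ℕ) :
    bpre a (x + n • bpre a x) = (n + 1) • bpre a x := by
  apply BP.ext_step
  intro b z
  rw [bstep_bpre]
  induction n generalizing z with
  | zero => simp [bstep_bpre]
  | succ n ih =>
    rw [succ_nsmul _ (n + 1), bstep_add]
    constructor
    · rintro ⟨rfl, rfl⟩
      refine Or.inr ⟨x, bstep_bpre.2 ⟨rfl, rfl⟩, ?_⟩
      rw [add_comm]
    · rintro (⟨x', hs, rfl⟩ | ⟨x', hs, rfl⟩)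
      · obtain ⟨rfl, rfl⟩ := (ih x').2 hs
        refine ⟨rfl, ?_⟩
        rw [succ_nsmul, add_assoc]
      · obtain ⟨rfl, rfl⟩ := bstep_bpre.1 hs
        exact ⟨rfl, add_comm _ _⟩

theorem EqD.sound {A : Type} {p q : Proc A} (h : EqD p q) : mk p = mk q := by
  induction h with
  | refl p => rfl
  | symm _ ih => exact ih.symm
  | trans _ _ ih1 ih2 => exact ih1.trans ih2
  | parComm p q => exact add_comm (mk p) (mk q)
  | parAssoc p q r => exact add_assoc (mk p) (mk q) (mk r)
  | parNil p => exact add_zero (mk p)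
  | distr a F n hF =>
    rw [mk_pre, mk_par, mk_reps, mk_reps, mk_pre]
    exact bpre_distr a (mk F) n
  | congPre a _ ih => exact mk_pre_congr a ih
  | congPar _ _ ih1 ih2 => rw [mk_par, mk_par, ih1, ih2]
  | congRepl a _ ih => exact mk_repl_congr a ih

/-! ### Sizes of finite processes -/

theorem Step.fin {A : Type} {p p' : Proc A} {a : A} (h : Step p a p') (hp : p.IsFin) :
    p'.IsFin ∧ p.size = p'.size + 1 := by
  induction h with
  | pre => exact ⟨hp, rfl⟩
  | repl => exact hp.elim
  | parL q _ ih =>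
    obtain ⟨h1, h2⟩ := ih hp.1
    refine ⟨⟨h1, hp.2⟩, ?_⟩
    simp only [Proc.size]; omega
  | parR q _ ih =>
    obtain ⟨h1, h2⟩ := ih hp.2
    refine ⟨⟨hp.1, h1⟩, ?_⟩
    simp only [Proc.size]; omega

theorem exists_step {A : Type} {p : Proc A} (hp : p.IsFin) (h : p.size ≠ 0) :
    ∃ a p', Step p a p' := by
  induction p with
  | nil => exact (h rfl).elim
  | pre a p _ => exact ⟨a, p, Step.pre⟩
  | repl a p _ => exact hp.elim
  | par p q ih1 ih2 =>
    by_cases h1 : p.size = 0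
    · have h2 : q.size ≠ 0 := by
        simp only [Proc.size] at h; omega
      obtain ⟨a, q', hs⟩ := ih2 hp.2 h2
      exact ⟨a, _, Step.parR _ hs⟩
    · obtain ⟨a, q', hs⟩ := ih1 hp.1 h1
      exact ⟨a, _, Step.parL _ hs⟩

theorem size_congr {A : Type} {p q : Proc A} (hp : p.IsFin) (hq : q.IsFin) (h : mk p = mk q) :
    p.size = q.size := by
  induction hn : p.size generalizing p q with
  | zero =>
    by_contra hne
    obtain ⟨a, q', hs⟩ := exists_step hq (Ne.symm hne)
    obtain ⟨p', hs', _⟩ := (mk_eq.1 h).bwd hs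
    have := (hs'.fin hp).2
    omega
  | succ n ih =>
    obtain ⟨a, p', hs⟩ := exists_step hp (by omega)
    obtain ⟨q', hs', hb⟩ := (mk_eq.1 h).fwd hs
    have h1 := hs.fin hp
    have h2 := hs'.fin hq
    have := ih h1.1 h2.1 (mk_eq.2 hb) (by omega)
    omega

theorem mk_of_size_zero {A : Type} {p : Proc A} (hp : p.IsFin) (h : p.size = 0) : mk p = 0 := by
  apply BP.ext_step
  intro a z
  constructor
  · intro hs
    obtain ⟨p', hs', _⟩ := bstep_mk.1 hs
    have := (hs'.fin hp).2
    omega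
  · intro hs
    exact (bstep_zero hs).elim

/-- Classes of finite processes. -/
def BFin {A : Type} (x : BP A) : Prop := ∃ F : Proc A, F.IsFin ∧ mk F = x

open Classical in
/-- Size of the class of a finite process. -/
noncomputable def bsize {A : Type} (x : BP A) : ℕ :=
  if h : BFin x then (Classical.choose h).size else 0

theorem bsize_mk {A : Type} {F : Proc A} (hF : F.IsFin) : bsize (mk F) = F.size := by
  have h : BFin (mk F) := ⟨F, hF, rfl⟩
  rw [bsize, dif_pos h]
  have := Classical.choose_spec h
  exact size_congr this.1 hF this.2

theorem BFin.add {A : Type} {x y : BP A} (hx : BFin x) (hy : BFin y) : BFin (x + y) := by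
  obtain ⟨F, hF, rfl⟩ := hx
  obtain ⟨G, hG, rfl⟩ := hy
  exact ⟨Proc.par F G, ⟨hF, hG⟩, rfl⟩

theorem bsize_add {A : Type} {x y : BP A} (hx : BFin x) (hy : BFin y) :
    bsize (x + y) = bsize x + bsize y := by
  obtain ⟨F, hF, rfl⟩ := hx
  obtain ⟨G, hG, rfl⟩ := hy
  rw [← mk_par, bsize_mk hF, bsize_mk hG, bsize_mk (F := Proc.par F G) ⟨hF, hG⟩]
  rfl

theorem BFin.bpre {A : Type} {x : BP A} (hx : BFin x) (a : A) : BFin (bpre a x) := by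
  obtain ⟨F, hF, rfl⟩ := hx
  exact ⟨Proc.pre a F, hF, rfl⟩

theorem bsize_bpre {A : Type} {x : BP A} (hx : BFin x) (a : A) :
    bsize (CCS.bpre a x) = bsize x + 1 := by
  obtain ⟨F, hF, rfl⟩ := hx
  rw [← mk_pre, bsize_mk hF, bsize_mk (F := Proc.pre a F) hF]
  rfl

theorem BFin.zero {A : Type} : BFin (0 : BP A) := ⟨Proc.nil, trivial, rfl⟩

theorem bsize_zero {A : Type} : bsize (0 : BP A) = 0 := by
  rw [← mk_nil, bsize_mk (F := Proc.nil) trivial]; rfl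

end CCS

namespace CCS

/-! ### Unique decomposition of finite processes -/

/-- Sum of a multiset of prefixed classes. -/
def asum {A : Type} (m : Multiset (A × BP A)) : BP A := (m.map fun c => bpre c.1 c.2).sum

theorem asum_zero {A : Type} : asum (0 : Multiset (A × BP A)) = 0 := by simp [asum]

theorem asum_cons {A : Type} (c : A × BP A) (m : Multiset (A × BP A)) :
    asum (c ::ₘ m) = bpre c.1 c.2 + asum m := by simp [asum]

theorem asum_add {A : Type} (m m' : Multiset (A × BP A)) :
    asum (m + m') = asum m + asum m' := by simp [asum]

theorem asum_nsmul {A : Type} (n : ℕ) (m : Multiset (A × BP A)) :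
    asum (n • m) = n • asum m := by
  induction n with
  | zero => simp [asum_zero]
  | succ n ih => rw [succ_nsmul, asum_add, ih, succ_nsmul]

/-- Prefixed classes which cannot be split by the distribution law. -/
def Irr {A : Type} (c : A × BP A) : Prop :=
  BFin c.2 ∧ ¬ ∃ y, BFin y ∧ ∃ j : ℕ, c.2 = y + (j + 1) • bpre c.1 y

def AllIrr {A : Type} (m : Multiset (A × BP A)) : Prop := ∀ c ∈ m, Irr c

theorem AllIrr.add {A : Type} {m m' : Multiset (A × BP A)} (h : AllIrr m) (h' : AllIrr m') :
    AllIrr (m + m') := by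
  intro c hc
  rcases Multiset.mem_add.1 hc with hc | hc
  · exact h c hc
  · exact h' c hc

theorem AllIrr.bfin {A : Type} {m : Multiset (A × BP A)} (h : AllIrr m) : BFin (asum m) := by
  induction m using Multiset.induction_on with
  | empty => rw [asum_zero]; exact BFin.zero
  | cons c m ih =>
    rw [asum_cons]
    exact ((h c (Multiset.mem_cons_self _ _)).1.bpre _).add
      (ih fun d hd => h d (Multiset.mem_cons_of_mem hd))

theorem bsize_asum_cons {A : Type} {c : A × BP A} {m : Multiset (A × BP A)}
    (h : AllIrr (c ::ₘ m)) : bsize (asum (c ::ₘ m)) = bsize c.2 + 1 + bsize (asum m) := by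
  have h1 := (h c (Multiset.mem_cons_self _ _)).1
  have h2 : AllIrr m := fun d hd => h d (Multiset.mem_cons_of_mem hd)
  rw [asum_cons, bsize_add (h1.bpre _) h2.bfin, bsize_bpre h1]

theorem bsize_mem {A : Type} {c : A × BP A} {m : Multiset (A × BP A)}
    (h : AllIrr m) (hc : c ∈ m) : bsize c.2 + 1 ≤ bsize (asum m) := by
  obtain ⟨m1, rfl⟩ := Multiset.exists_cons_of_mem hc
  rw [bsize_asum_cons h]
  omega

theorem bstep_asum {A : Type} {m : Multiset (A × BP A)} {a : A} {z : BP A}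
    (h : BStep (asum m) a z) :
    ∃ c m1, m = c ::ₘ m1 ∧ c.1 = a ∧ z = c.2 + asum m1 := by
  induction m using Multiset.induction_on generalizing z with
  | empty => rw [asum_zero] at h; exact (bstep_zero h).elim
  | cons c m ih =>
    rw [asum_cons] at h
    rcases bstep_add.1 h with ⟨x', hs, rfl⟩ | ⟨y', hs, rfl⟩
    · obtain ⟨rfl, rfl⟩ := bstep_bpre.1 hs
      exact ⟨c, m, rfl, rfl, rfl⟩
    · obtain ⟨d, m1, rfl, h1, rfl⟩ := ih hs
      refine ⟨d, c ::ₘ m1, Multiset.cons_swap _ _ _, h1, ?_⟩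
      rw [asum_cons, add_left_comm]

theorem exists_dec {A : Type} (n : ℕ) :
    ∀ F : Proc A, F.IsFin → F.size ≤ n → ∃ m, AllIrr m ∧ asum m = mk F := by
  induction n using Nat.strong_induction_on with
  | _ n IH =>
    intro F
    induction F with
    | nil => exact fun _ _ => ⟨0, fun c hc => by simp at hc, asum_zero⟩
    | repl a p _ => exact fun h => h.elim
    | par p q ih1 ih2 =>
      intro hF hn
      simp only [Proc.size] at hn
      obtain ⟨m1, h1, h1'⟩ := ih1 hF.1 (by omega)
      obtain ⟨m2, h2, h2'⟩ := ih2 hF.2 (by omega)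
      exact ⟨m1 + m2, h1.add h2, by rw [asum_add, h1', h2', mk_par]⟩
    | pre a p _ =>
      intro hF hn
      simp only [Proc.size] at hn
      have hp : BFin (mk p) := ⟨p, hF, rfl⟩
      by_cases hi : Irr (a, mk p)
      · refine ⟨{(a, mk p)}, ?_, ?_⟩
        · intro c hc
          rw [Multiset.mem_singleton] at hc
          rw [hc]; exact hi
        · simp [asum, mk_pre]
      · have : ∃ y, BFin y ∧ ∃ j : ℕ, mk p = y + (j + 1) • bpre a y := by
          by_contra hc
          exact hi ⟨hp, hc⟩
        obtain ⟨_, ⟨K, hK, rfl⟩, j, hj⟩ := this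
        have hsz : K.size + 1 ≤ p.size := by
          have e : mk p = mk (Proc.par K (Proc.par (Proc.pre a K) (Proc.reps j (Proc.pre a K)))) := by
            rw [hj, mk_par, mk_par, mk_reps, succ_nsmul, mk_pre, add_comm (j • _)]
          have hr : ∀ j, (Proc.reps j (Proc.pre a K)).IsFin := by
            intro j
            induction j with
            | zero => trivial
            | succ j ih => exact ⟨hK, ih⟩
          have := size_congr (p := p) (q := Proc.par K (Proc.par (Proc.pre a K)
            (Proc.reps j (Proc.pre a K)))) hF ⟨hK, hK, hr j⟩ e
          simp only [Proc.size] at this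
          omega
        obtain ⟨m, hm, hm'⟩ := IH (K.size + 1) (by omega) (Proc.pre a K) hK le_rfl
        refine ⟨(j + 1 + 1) • m, ?_, ?_⟩
        · intro c hc
          exact hm c (Multiset.mem_of_mem_nsmul hc)
        · rw [asum_nsmul, hm', mk_pre, mk_pre, hj, bpre_distr]

theorem uniq_core {A : Type} (n : ℕ)
    (IH : ∀ m1 m2 : Multiset (A × BP A), AllIrr m1 → AllIrr m2 → asum m1 = asum m2 →
      bsize (asum m1) < n → m1 = m2)
    (count : A × BP A → Multiset (A × BP A) → ℕ)
    (count_cons : ∀ a b m, a ≠ b → count a (b ::ₘ m) = count a m)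
    (count_self : ∀ a m, count a (a ::ₘ m) = count a m + 1)
    (count_add : ∀ a m m', count a (m + m') = count a m + count a m')
    (count_pos : ∀ a m, 0 < count a m ↔ a ∈ m)
    (m m' : Multiset (A × BP A)) (hm : AllIrr m) (hm' : AllIrr m') (heq : asum m = asum m')
    (hn : bsize (asum m) = n) (c : A × BP A) (hc : count c m' < count c m)
    (hmax : ∀ b, bsize c.2 < bsize b.2 → count b m = count b m') : False := by
  have hd0 : ∀ x : BP A, ∃ mm, BFin x → AllIrr mm ∧ asum mm = x := by
    intro x
    by_cases hx : BFin x
    · obtain ⟨F, hF, rfl⟩ := hx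
      obtain ⟨mm, h⟩ := exists_dec F.size F hF le_rfl
      exact ⟨mm, fun _ => h⟩
    · exact ⟨0, fun h => (hx h).elim⟩
  choose d hd using hd0
  have hmatch : ∀ p q : Multiset (A × BP A), AllIrr p → AllIrr q → asum p = asum q →
      bsize (asum p) = n → ∀ b p1, p = b ::ₘ p1 → ∃ b' q1, q = b' ::ₘ q1 ∧ b'.1 = b.1 ∧
      d b.2 + p1 = d b'.2 + q1 := by
    rintro _ q hp hq hpq hpn b p1 rfl
    have hs : BStep (asum (b ::ₘ p1)) b.1 (b.2 + asum p1) := by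
      rw [asum_cons]
      exact (bstep_bpre.2 ⟨rfl, rfl⟩ : BStep (bpre b.1 b.2) b.1 b.2).left _
    rw [hpq] at hs
    obtain ⟨b', q1, rfl, hb, he⟩ := bstep_asum hs
    have hb1 := hd b.2 (hp b (Multiset.mem_cons_self _ _)).1
    have hb2 := hd b'.2 (hq b' (Multiset.mem_cons_self _ _)).1
    have hp1 : AllIrr p1 := fun d hd => hp d (Multiset.mem_cons_of_mem hd)
    have hq1 : AllIrr q1 := fun d hd => hq d (Multiset.mem_cons_of_mem hd)
    refine ⟨b', q1, rfl, hb, IH _ _ (hb1.1.add hp1) (hb2.1.add hq1) ?_ ?_⟩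
    · rw [asum_add, asum_add, hb1.2, hb2.2, he]
    · rw [asum_add, hb1.2, bsize_add (hp b (Multiset.mem_cons_self _ _)).1 hp1.bfin, ← hpn,
        bsize_asum_cons hp]
      omega
  have hsmall : ∀ c b : A × BP A, BFin b.2 → bsize b.2 ≤ bsize c.2 → count c (d b.2) = 0 := by
    intro c b hb hle
    by_contra hne
    have hmem := (count_pos c (d b.2)).1 (Nat.pos_of_ne_zero hne)
    have h1 := hd b.2 hb
    have := bsize_mem h1.1 hmem
    rw [h1.2] at this
    omega
  have hmono : ∀ c b m, count c m ≤ count c (b ::ₘ m) := by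
    intro c b m
    by_cases h : c = b
    · subst h; rw [count_self]; omega
    · rw [count_cons c b m h]
  by_cases hbig : ∃ b ∈ m, bsize c.2 < bsize b.2
  · classical
    obtain ⟨b0, hb0, hlt0⟩ := hbig
    obtain ⟨b, hb, hbmax⟩ := (m.toFinset.filter (fun b => bsize c.2 < bsize b.2)).exists_max_image
      (fun b => count c (d b.2)) ⟨b0, by simp [hb0, hlt0]⟩
    simp only [Finset.mem_filter, Multiset.mem_toFinset] at hb hbmax
    obtain ⟨m1, hm1⟩ := Multiset.exists_cons_of_mem hb.1
    obtain ⟨b', m1', hm1', _, he⟩ := hmatch m m' hm hm' heq hn b m1 hm1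
    have hec := congrArg (count c) he
    rw [count_add, count_add] at hec
    have h1 : count c m = count c m1 := by
      rw [hm1]
      apply count_cons
      rintro rfl
      omega
    have h2 : count c m1' ≤ count c m' := by
      rw [hm1']; exact hmono _ _ _
    have hb'm : b' ∈ m' := by rw [hm1']; exact Multiset.mem_cons_self _ _
    by_cases hl : bsize c.2 < bsize b'.2
    · have : b' ∈ m := by
        rw [← count_pos, hmax b' hl, count_pos]; exact hb'm
      have := hbmax b' ⟨this, hl⟩
      omega
    · have := hsmall c b' (hm' b' hb'm).1 (by omega)
      omega
  · push Not at hbig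
    have hbig' : ∀ b ∈ m', bsize b.2 ≤ bsize c.2 := by
      intro b hb
      by_contra hl
      have hl' : bsize c.2 < bsize b.2 := by omega
      rw [← count_pos, ← hmax b hl', count_pos] at hb
      exact hl (hbig b hb)
    have hcm : c ∈ m := (count_pos c m).1 (by omega)
    obtain ⟨m0, hm0⟩ := Multiset.exists_cons_of_mem hcm
    by_cases hoth : ∃ b ∈ m, c ≠ b
    · obtain ⟨b, hb, hne⟩ := hoth
      obtain ⟨m1, hm1⟩ := Multiset.exists_cons_of_mem hb
      obtain ⟨b', m1', hm1', _, he⟩ := hmatch m m' hm hm' heq hn b m1 hm1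
      have hb'm : b' ∈ m' := by rw [hm1']; exact Multiset.mem_cons_self _ _
      have hec := congrArg (count c) he
      rw [count_add, count_add, hsmall c b (hm b hb).1 (hbig b hb),
        hsmall c b' (hm' b' hb'm).1 (hbig' b' hb'm)] at hec
      have h1 : count c m = count c m1 := by
        rw [hm1]
        exact count_cons _ _ _ hne
      have h2 : count c m1' ≤ count c m' := by
        rw [hm1']; exact hmono _ _ _
      omega
    · push Not at hoth
      have hcd := hsmall c c (hm c hcm).1 le_rfl
      by_cases hl : 0 < count c m'
      · obtain ⟨m1', hm1'⟩ := Multiset.exists_cons_of_mem ((count_pos c m').1 hl)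
        obtain ⟨b, m1, hm1, _, he⟩ := hmatch m' m hm' hm heq.symm (heq ▸ hn) c m1' hm1'
        have hbm : b ∈ m := by rw [hm1]; exact Multiset.mem_cons_self _ _
        have hbc := hoth b hbm
        subst hbc
        have hec := congrArg (count c) he
        rw [count_add, count_add] at hec
        have h1 : count c m = count c m1 + 1 := by rw [hm1]; exact count_self _ _
        have h2 : count c m' = count c m1' + 1 := by rw [hm1']; exact count_self _ _
        omega
      · obtain ⟨b', m1', hm1', hfst, he⟩ := hmatch m m' hm hm' heq hn c m0 hm0
        have hb'm : b' ∈ m' := by rw [hm1']; exact Multiset.mem_cons_self _ _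
        have hec := congrArg (count c) he
        rw [count_add, count_add, hcd, hsmall c b' (hm' b' hb'm).1 (hbig' b' hb'm)] at hec
        have h2 : count c m1' ≤ count c m' := by
          rw [hm1']; exact hmono _ _ _
        have hm00 : m0 = 0 := by
          rw [Multiset.eq_zero_iff_forall_notMem]
          intro x hx
          have := hoth x (by rw [hm0]; exact Multiset.mem_cons_of_mem hx)
          subst this
          have := (count_pos c m0).2 hx
          omega
        rw [hm00, add_zero] at he
        have hall : ∀ x ∈ m1', x = b' := by
          intro x hx
          by_contra hne
          have hxm : x ∈ m' := by rw [hm1']; exact Multiset.mem_cons_of_mem hx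
          obtain ⟨m2, hm2⟩ := Multiset.exists_cons_of_mem hxm
          obtain ⟨c', q1, hq1, _, he2⟩ := hmatch m' m hm' hm heq.symm (heq ▸ hn) x m2 hm2
          have hc'm : c' ∈ m := by rw [hq1]; exact Multiset.mem_cons_self _ _
          have := hoth c' hc'm
          subst this
          have hq0 : q1 = 0 := by
            rw [hm0, hm00] at hq1
            exact ((Multiset.cons_inj_right _).1 hq1).symm
          rw [hq0, add_zero, he] at he2
          have hec2 := congrArg (count b') he2
          rw [count_add, count_add, hsmall b' b' (hm' b' hb'm).1 le_rfl] at hec2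
          have e1 : count b' m' = count b' m2 := by
            rw [hm2]; exact count_cons _ _ _ (Ne.symm hne)
          have e2 : count b' m' = count b' m1' + 1 := by
            rw [hm1']; exact count_self _ _
          omega
        have hrep : m1' = Multiset.replicate (Multiset.card m1') b' :=
          Multiset.eq_replicate.2 ⟨rfl, hall⟩
        have hdc := hd c.2 (hm c hcm).1
        have hdb := hd b'.2 (hm' b' hb'm).1
        have hx : c.2 = b'.2 + Multiset.card m1' • bpre c.1 b'.2 := by
          rw [← hdc.2, he, asum_add, hdb.2, hrep, ← Multiset.nsmul_singleton, asum_nsmul]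
          simp [asum, hfst]
        rcases hk : Multiset.card m1' with _ | j
        · rw [hk, zero_nsmul, add_zero] at hx
          have : b' = c := Prod.ext hfst hx.symm
          subst this
          exact hl ((count_pos b' m').2 hb'm)
        · rw [hk] at hx
          exact (hm c hcm).2 ⟨b'.2, (hm' b' hb'm).1, j, hx⟩

theorem uniq_dec {A : Type} (n : ℕ) : ∀ m m' : Multiset (A × BP A), AllIrr m → AllIrr m' →
    asum m = asum m' → bsize (asum m) = n → m = m' := by
  induction n using Nat.strong_induction_on with
  | _ n IH =>
    intro m m' hm hm' heq hn
    classical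
    by_contra hne
    have hex : ∃ c, m.count c ≠ m'.count c := by
      by_contra hcon
      push Not at hcon
      exact hne (Multiset.ext.2 hcon)
    obtain ⟨c0, hc0⟩ := hex
    have hmem : ∀ c, m.count c ≠ m'.count c → c ∈ (m + m').toFinset := by
      intro c h
      rw [Multiset.mem_toFinset, ← Multiset.count_pos, Multiset.count_add]
      omega
    obtain ⟨c, hc, hcmax⟩ :=
      ((m + m').toFinset.filter (fun c => m.count c ≠ m'.count c)).exists_max_image
      (fun b => bsize b.2) ⟨c0, Finset.mem_filter.2 ⟨hmem c0 hc0, hc0⟩⟩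
    have hc1 := (Finset.mem_filter.1 hc).2
    have hmax : ∀ b, bsize c.2 < bsize b.2 → m.count b = m'.count b := by
      intro b hb
      by_contra h
      have := hcmax b (Finset.mem_filter.2 ⟨hmem b h, h⟩)
      omega
    have IH' : ∀ m1 m2 : Multiset (A × BP A), AllIrr m1 → AllIrr m2 → asum m1 = asum m2 →
      bsize (asum m1) < n → m1 = m2 := fun m1 m2 h1 h2 h3 h4 => IH _ h4 m1 m2 h1 h2 h3 rfl
    rcases Nat.lt_or_gt_of_ne hc1 with h | h
    · exact uniq_core n IH' (fun a m => m.count a)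
        (fun a b m h => Multiset.count_cons_of_ne h m) (fun a m => Multiset.count_cons_self a m)
        (fun a m m' => Multiset.count_add a m m') (fun a m => Multiset.count_pos)
        m' m hm' hm heq.symm (heq ▸ hn) c h (fun b hb => (hmax b hb).symm)
    · exact uniq_core n IH' (fun a m => m.count a)
        (fun a b m h => Multiset.count_cons_of_ne h m) (fun a m => Multiset.count_cons_self a m)
        (fun a m m' => Multiset.count_add a m m') (fun a m => Multiset.count_pos)
        m m' hm hm' heq hn c h hmax

end CCS

namespace CCS

/-! ### Completeness of the distribution law on finite processes -/

theorem EqD.nilPar {A : Type} (p : Proc A) : EqD (Proc.par Proc.nil p) p :=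
  (EqD.parComm _ _).trans (EqD.parNil p)

theorem prodPre_cons {A : Type} (x : A × Proc A) (l : List (A × Proc A)) :
    prodPre (x :: l) = Proc.par (Proc.pre x.1 x.2) (prodPre l) := rfl

theorem prodPre_append {A : Type} (l l' : List (A × Proc A)) :
    EqD (prodPre (l ++ l')) (Proc.par (prodPre l) (prodPre l')) := by
  induction l with
  | nil => exact (EqD.nilPar _).symm
  | cons x l ih =>
    rw [List.cons_append, prodPre_cons, prodPre_cons]
    exact (EqD.congPar (EqD.refl _) ih).trans (EqD.parAssoc _ _ _).symm

theorem prodPre_perm {A : Type} {l l' : List (A × Proc A)} (h : l.Perm l') :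
    EqD (prodPre l) (prodPre l') := by
  induction h with
  | nil => exact EqD.refl _
  | cons x _ ih => exact EqD.congPar (EqD.refl _) ih
  | swap x y l =>
    simp only [prodPre_cons]
    exact (EqD.parAssoc _ _ _).symm.trans
      ((EqD.congPar (EqD.parComm _ _) (EqD.refl _)).trans (EqD.parAssoc _ _ _))
  | trans _ _ ih1 ih2 => exact ih1.trans ih2

theorem mk_prodPre {A : Type} (l : List (A × Proc A)) :
    mk (prodPre l) = asum (↑(l.map fun x => (x.1, mk x.2)) : Multiset (A × BP A)) := by
  induction l with
  | nil => exact asum_zero.symm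
  | cons x l ih =>
    rw [prodPre_cons, mk_par, ih, List.map_cons, ← Multiset.cons_coe, asum_cons, mk_pre]

theorem prodPre_fin {A : Type} {l : List (A × Proc A)} (h : ∀ x ∈ l, x.2.IsFin) :
    (prodPre l).IsFin ∧ ∀ x ∈ l, x.2.size + 1 ≤ (prodPre l).size := by
  induction l with
  | nil => exact ⟨trivial, by simp⟩
  | cons y l ih =>
    have ih' := ih fun x hx => h x (List.mem_cons_of_mem _ hx)
    rw [prodPre_cons]
    refine ⟨⟨h y List.mem_cons_self, ih'.1⟩, ?_⟩
    intro x hx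
    simp only [Proc.size]
    rcases List.mem_cons.1 hx with rfl | hx
    · omega
    · have := ih'.2 x hx
      omega

theorem reps_prodPre {A : Type} {p : Proc A} {l : List (A × Proc A)} (h : EqD p (prodPre l))
    (n : ℕ) : ∃ l', (∀ x ∈ l', x ∈ l) ∧ EqD (Proc.reps n p) (prodPre l') := by
  induction n with
  | zero => exact ⟨[], by simp, EqD.refl _⟩
  | succ n ih =>
    obtain ⟨l', h1, h2⟩ := ih
    refine ⟨l ++ l', ?_, ?_⟩
    · intro x hx
      rcases List.mem_append.1 hx with hx | hx
      · exact hx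
      · exact h1 x hx
    · exact (EqD.congPar h h2).trans (prodPre_append _ _).symm

theorem reps_fin {A : Type} {p : Proc A} (h : p.IsFin) (n : ℕ) : (Proc.reps n p).IsFin := by
  induction n with
  | zero => trivial
  | succ n ih => exact ⟨h, ih⟩

/-- Decomposition of a finite process up to the distribution law. -/
def HasDec {A : Type} (F : Proc A) : Prop :=
  ∃ l : List (A × Proc A), (∀ x ∈ l, x.2.IsFin ∧ Irr (x.1, mk x.2)) ∧ EqD F (prodPre l)

theorem hasDec_of {A : Type} (n : ℕ)
    (IH : ∀ F : Proc A, F.IsFin → F.size < n →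
      HasDec F ∧ ∀ G : Proc A, G.IsFin → mk F = mk G → EqD F G) :
    ∀ F : Proc A, F.IsFin → F.size ≤ n → HasDec F := by
  intro F
  induction F with
  | nil => exact fun _ _ => ⟨[], by simp, EqD.refl _⟩
  | repl a p _ => exact fun h => h.elim
  | par p q ih1 ih2 =>
    intro hF hn
    simp only [Proc.size] at hn
    obtain ⟨l1, h1, h1'⟩ := ih1 hF.1 (by omega)
    obtain ⟨l2, h2, h2'⟩ := ih2 hF.2 (by omega)
    refine ⟨l1 ++ l2, ?_, (EqD.congPar h1' h2').trans (prodPre_append _ _).symm⟩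
    intro x hx
    rcases List.mem_append.1 hx with hx | hx
    · exact h1 x hx
    · exact h2 x hx
  | pre a p _ =>
    intro hF hn
    simp only [Proc.size] at hn
    have hp : BFin (mk p) := ⟨p, hF, rfl⟩
    by_cases hi : Irr (a, mk p)
    · refine ⟨[(a, p)], ?_, (EqD.parNil _).symm⟩
      intro x hx
      rw [List.mem_singleton] at hx
      subst hx
      exact ⟨hF, hi⟩
    · have : ∃ y, BFin y ∧ ∃ j : ℕ, mk p = y + (j + 1) • bpre a y := by
        by_contra hc
        exact hi ⟨hp, hc⟩
      obtain ⟨_, ⟨K, hK, rfl⟩, j, hj⟩ := this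
      have hfin : (Proc.par K (Proc.reps (j + 1) (Proc.pre a K))).IsFin :=
        ⟨hK, reps_fin (p := Proc.pre a K) hK (j + 1)⟩
      have e : mk p = mk (Proc.par K (Proc.reps (j + 1) (Proc.pre a K))) := by
        rw [hj, mk_par, mk_reps, mk_pre]
      have hsz := size_congr (p := p) hF hfin e
      simp only [Proc.size, Proc.reps] at hsz
      obtain ⟨l, hl, hl'⟩ := (IH (Proc.pre a K) hK (by simp only [Proc.size]; omega)).1
      obtain ⟨l', h1, h2⟩ := reps_prodPre hl' (j + 1 + 1)
      refine ⟨l', fun x hx => hl x (h1 x hx), ?_⟩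
      have hE : EqD p (Proc.par K (Proc.reps (j + 1) (Proc.pre a K))) :=
        (IH p hF (by omega)).2 _ hfin e
      exact ((EqD.congPre a hE).trans (EqD.distr a K (j + 1) hK)).trans h2

theorem prodPre_congr {A : Type} (f : A × Proc A → A × Proc A) {l : List (A × Proc A)}
    (h : ∀ x ∈ l, (f x).1 = x.1 ∧ EqD x.2 (f x).2) : EqD (prodPre l) (prodPre (l.map f)) := by
  induction l with
  | nil => exact EqD.refl _
  | cons x l ih =>
    rw [List.map_cons, prodPre_cons, prodPre_cons]
    have hx := h x List.mem_cons_self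
    rw [hx.1]
    exact EqD.congPar (EqD.congPre _ hx.2) (ih fun y hy => h y (List.mem_cons_of_mem _ hy))

theorem fin_complete_aux {A : Type} (n : ℕ) : ∀ F : Proc A, F.IsFin → F.size = n →
    HasDec F ∧ ∀ G : Proc A, G.IsFin → mk F = mk G → EqD F G := by
  induction n using Nat.strong_induction_on with
  | _ n IH =>
    have IH' : ∀ F : Proc A, F.IsFin → F.size < n →
        HasDec F ∧ ∀ G : Proc A, G.IsFin → mk F = mk G → EqD F G :=
      fun F hF h => IH _ h F hF rfl
    intro F hF hn
    refine ⟨hasDec_of n IH' F hF hn.le, ?_⟩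
    intro G hG hFG
    have hGn : G.size = n := by rw [← hn]; exact (size_congr hF hG hFG).symm
    have hr0 : ∀ x : BP A, ∃ K : Proc A, BFin x → K.IsFin ∧ mk K = x := by
      intro x
      by_cases hx : BFin x
      · obtain ⟨K, hK⟩ := hx
        exact ⟨K, fun _ => hK⟩
      · exact ⟨Proc.nil, fun h => (hx h).elim⟩
    choose r hr using hr0
    have key : ∀ F : Proc A, F.IsFin → F.size = n → ∃ l : List (A × BP A),
        AllIrr (↑l : Multiset (A × BP A)) ∧ mk F = asum (↑l : Multiset (A × BP A)) ∧
        EqD F (prodPre (l.map fun x => (x.1, r x.2))) := by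
      intro F hF hn
      obtain ⟨l, hl, hE⟩ := hasDec_of n IH' F hF hn.le
      have hpf := prodPre_fin fun x hx => (hl x hx).1
      have hsz := size_congr hF hpf.1 hE.sound
      refine ⟨l.map fun x => (x.1, mk x.2), ?_, ?_, ?_⟩
      · intro c hc
        rw [Multiset.mem_coe, List.mem_map] at hc
        obtain ⟨x, hx, rfl⟩ := hc
        exact (hl x hx).2
      · rw [hE.sound, mk_prodPre]
      · rw [List.map_map]
        refine hE.trans (prodPre_congr _ ?_)
        intro x hx
        refine ⟨rfl, ?_⟩
        have h1 := (hl x hx).1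
        have h2 := hpf.2 x hx
        have h3 := hr (mk x.2) ⟨x.2, h1, rfl⟩
        exact (IH' x.2 h1 (by omega)).2 _ h3.1 h3.2.symm
    obtain ⟨l, h1, h2, h3⟩ := key F hF hn
    obtain ⟨l', h1', h2', h3'⟩ := key G hG hGn
    have := uniq_dec _ _ _ h1 h1' (by rw [← h2, ← h2', hFG]) rfl
    have hperm := Multiset.coe_eq_coe.1 this
    exact h3.trans ((prodPre_perm (hperm.map _)).trans h3'.symm)

theorem fin_complete {A : Type} {F G : Proc A} (hF : F.IsFin) (hG : G.IsFin)
    (h : mk F = mk G) : EqD F G := (fin_complete_aux _ F hF rfl).2 G hG h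

end CCS

namespace CCS

/-! ### Occurrences, erasure and replicated parts -/

/-- `Occ a F p`: the prefixed process `a.F` occurs in `p`. -/
def Occ {A : Type} (a : A) (F : Proc A) : Proc A → Prop
  | .nil => False
  | .pre b p => (b = a ∧ p = F) ∨ Occ a F p
  | .par p q => Occ a F p ∨ Occ a F q
  | .repl _ p => Occ a F p

theorem Step.occ {A : Type} {p p' : Proc A} {b : A} (h : Step p b p') {a : A} {F : Proc A}
    (ho : Occ a F p') : Occ a F p := by
  induction h with
  | pre => exact Or.inr ho
  | repl => exact ho.elim id id
  | parL q _ ih => exact ho.imp ih id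
  | parR q _ ih => exact ho.imp id ih

theorem NSteps.occ {A : Type} {p p' : Proc A} {k : ℕ} (h : NSteps p k p') {a : A} {F : Proc A}
    (ho : Occ a F p') : Occ a F p := by
  induction h with
  | zero => exact ho
  | succ hs _ ih => exact hs.occ (ih ho)

theorem Occ.size {A : Type} {a : A} {F p : Proc A} (h : Occ a F p) : F.size + 1 ≤ p.size := by
  induction p with
  | nil => exact h.elim
  | pre b p ih =>
    simp only [Proc.size]
    rcases h with ⟨_, rfl⟩ | h
    · exact le_rfl
    · have := ih h; omega
  | par p q ih1 ih2 =>
    simp only [Proc.size]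
    rcases h with h | h
    · have := ih1 h; omega
    · have := ih2 h; omega
  | repl b p ih =>
    simp only [Proc.size]
    have := ih h; omega

theorem Proc.IsFin.wf {A : Type} {p : Proc A} (h : p.IsFin) : p.Wf := by
  induction p with
  | nil => trivial
  | pre b p _ => exact h
  | par p q ih1 ih2 => exact ⟨ih1 h.1, ih2 h.2⟩
  | repl b p _ => exact h.elim

theorem Step.wf {A : Type} {p p' : Proc A} {b : A} (h : Step p b p') (hp : p.Wf) : p'.Wf := by
  induction h with
  | pre => exact Proc.IsFin.wf hp
  | repl => exact ⟨hp, Proc.IsFin.wf hp⟩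
  | parL q _ ih => exact ⟨ih hp.1, hp.2⟩
  | parR q _ ih => exact ⟨hp.1, ih hp.2⟩

theorem NSteps.wf {A : Type} {p p' : Proc A} {k : ℕ} (h : NSteps p k p') (hp : p.Wf) :
    p'.Wf := by
  induction h with
  | zero => exact hp
  | succ hs _ ih => exact ih (hs.wf hp)

/-- The non-replicated part of a process. -/
def finPart {A : Type} : Proc A → Proc A
  | .nil => .nil
  | .pre a p => .pre a p
  | .par p q => .par (finPart p) (finPart q)
  | .repl _ _ => .nil

theorem finPart_fin {A : Type} {p : Proc A} (h : p.Wf) : (finPart p).IsFin := by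
  induction p with
  | nil => trivial
  | pre b p _ => exact h
  | par p q ih1 ih2 => exact ⟨ih1 h.1, ih2 h.2⟩
  | repl b p _ => trivial

theorem finPart_of_fin {A : Type} {p : Proc A} (h : p.IsFin) : finPart p = p := by
  induction p with
  | nil => rfl
  | pre b p _ => rfl
  | par p q ih1 ih2 => rw [finPart, ih1 h.1, ih2 h.2]
  | repl b p _ => exact h.elim

theorem finPart_occ {A : Type} {a : A} {F p : Proc A} (h : Occ a F (finPart p)) : Occ a F p := by
  induction p with
  | nil => exact h
  | pre b p _ => exact h
  | par p q ih1 ih2 => exact h.imp ih1 ih2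
  | repl b p _ => exact h.elim

theorem finPart_replOnly {A : Type} {p : Proc A} (h : ReplOnly p) :
    EqD (finPart p) Proc.nil := by
  induction p with
  | nil => exact EqD.refl _
  | pre b p _ => exact h.elim
  | par p q ih1 ih2 => exact (EqD.congPar (ih1 h.1) (ih2 h.2)).trans (EqD.parNil _)
  | repl b p _ => exact EqD.refl _

theorem finPart_reps {A : Type} (a : A) (p : Proc A) (n : ℕ) :
    finPart (Proc.reps n (Proc.pre a p)) = Proc.reps n (Proc.pre a p) := by
  induction n with
  | zero => rfl
  | succ n ih => rw [Proc.reps, finPart, ih]; rfl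

theorem EqD.finPart {A : Type} {p q : Proc A} (h : EqD p q) :
    EqD (CCS.finPart p) (CCS.finPart q) := by
  induction h with
  | refl p => exact EqD.refl _
  | symm _ ih => exact ih.symm
  | trans _ _ ih1 ih2 => exact ih1.trans ih2
  | parComm p q => exact EqD.parComm _ _
  | parAssoc p q r => exact EqD.parAssoc _ _ _
  | parNil p => exact EqD.parNil _
  | distr a F n hF =>
    rw [finPart_reps]
    exact EqD.distr a F n hF
  | congPre a h _ => exact EqD.congPre a h
  | congPar _ _ ih1 ih2 => exact EqD.congPar ih1 ih2
  | congRepl a _ _ => exact EqD.refl _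

/-- Finite processes all of whose prefixed subterms occur in `S`. -/
def Good {A : Type} (S T : Proc A) : Prop := T.IsFin ∧ ∀ a F, Occ a F T → Occ a F S

theorem purg_good {A : Type} {S R : Proc A} (hS : ReplOnly S) (hwf : S.Wf) (hR : R.IsFin)
    (h : Purg S R) : ∃ T, Good S T ∧ EqD R T := by
  obtain ⟨k, _, p, hst, hE⟩ := h
  refine ⟨finPart p, ⟨finPart_fin (hst.wf hwf), fun a F ho => hst.occ (finPart_occ ho)⟩, ?_⟩
  have h1 : EqD (finPart p) (Proc.par (finPart S) (finPart R)) := hE.finPart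
  rw [finPart_of_fin hR] at h1
  exact (h1.trans ((EqD.congPar (finPart_replOnly hS) (EqD.refl _)).trans (EqD.nilPar _))).symm

theorem ReplOnly.wf {A : Type} {S : Proc A} (h : ReplOnly S) : S.Wf := by
  induction S with
  | nil => trivial
  | pre b p _ => exact h.elim
  | par p q ih1 ih2 => exact ⟨ih1 h.1, ih2 h.2⟩
  | repl b p _ => exact h

theorem replOnly_step {A : Type} {S : Proc A} (hS : ReplOnly S) {a : A} {z : BP A}
    (h : BStep (mk S) a z) : ∃ G, TopRepl S a G ∧ z = mk S + mk G := by
  induction S generalizing z with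
  | nil => exact (bstep_zero h).elim
  | pre b p _ => exact hS.elim
  | par p q ih1 ih2 =>
    rw [mk_par] at h
    rcases bstep_add.1 h with ⟨x', hs, rfl⟩ | ⟨y', hs, rfl⟩
    · obtain ⟨G, hG, rfl⟩ := ih1 hS.1 hs
      exact ⟨G, TopRepl.parL _ hG, by rw [mk_par, add_right_comm]⟩
    · obtain ⟨G, hG, rfl⟩ := ih2 hS.2 hs
      exact ⟨G, TopRepl.parR _ hG, by rw [mk_par, add_assoc]⟩
  | repl b p _ =>
    obtain ⟨rfl, rfl⟩ := bstep_mk_repl.1 h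
    exact ⟨p, TopRepl.repl _ _, rfl⟩

theorem TopRepl.good {A : Type} {S G : Proc A} {a : A} (h : TopRepl S a G) (hS : ReplOnly S) :
    Good S G := by
  induction h with
  | repl a p => exact ⟨hS, fun _ _ h => h⟩
  | parL q _ ih => exact ⟨(ih hS.1).1, fun b F h => Or.inl ((ih hS.1).2 b F h)⟩
  | parR q _ ih => exact ⟨(ih hS.2).1, fun b F h => Or.inr ((ih hS.2).2 b F h)⟩

theorem TopRepl.split {A : Type} {S G : Proc A} {a : A} (h : TopRepl S a G) (hS : ReplOnly S) :
    ∃ S0, ReplOnly S0 ∧ mk S = mk S0 + mk (Proc.repl a G) ∧ S.size = S0.size + G.size + 1 ∧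
      ∀ b F, Occ b F S → Occ b F S0 ∨ Occ b F G := by
  induction h with
  | repl a p =>
    refine ⟨Proc.nil, trivial, by rw [mk_nil, zero_add], ?_, fun _ _ h => Or.inr h⟩
    simp only [Proc.size]; omega
  | @parL p a r q _ ih =>
    obtain ⟨S0, h1, h2, h3, h4⟩ := ih hS.1
    refine ⟨Proc.par S0 q, ⟨h1, hS.2⟩, ?_, ?_, ?_⟩
    · rw [mk_par, h2, mk_par, add_right_comm]
    · simp only [Proc.size]; omega
    · rintro b F (h | h)
      · exact (h4 b F h).imp Or.inl id
      · exact Or.inl (Or.inr h)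
  | @parR q a r p _ ih =>
    obtain ⟨S0, h1, h2, h3, h4⟩ := ih hS.2
    refine ⟨Proc.par p S0, ⟨hS.1, h1⟩, ?_, ?_, ?_⟩
    · rw [mk_par, h2, mk_par, add_assoc]
    · simp only [Proc.size]; omega
    · rintro b F (h | h)
      · exact Or.inl (Or.inl h)
      · exact (h4 b F h).imp Or.inr id

open Classical in
/-- Erase all occurrences of `a.R`. -/
noncomputable def er {A : Type} (a : A) (R : Proc A) : Proc A → Proc A
  | .nil => .nil
  | .pre b p => if b = a ∧ p = R then .nil else .pre b (er a R p)
  | .par p q => .par (er a R p) (er a R q)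
  | .repl b p => .repl b (er a R p)

theorem er_fin {A : Type} (a : A) (R : Proc A) {p : Proc A} (h : p.IsFin) :
    (er a R p).IsFin := by
  induction p with
  | nil => trivial
  | pre b p ih =>
    rw [er]
    split
    · trivial
    · exact ih h
  | par p q ih1 ih2 => exact ⟨ih1 h.1, ih2 h.2⟩
  | repl b p _ => exact h.elim

theorem er_replOnly {A : Type} (a : A) (R : Proc A) {p : Proc A} (h : ReplOnly p) :
    ReplOnly (er a R p) := by
  induction p with
  | nil => trivial
  | pre b p ih => exact h.elim
  | par p q ih1 ih2 => exact ⟨ih1 h.1, ih2 h.2⟩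
  | repl b p _ => exact er_fin a R h

theorem er_size_le {A : Type} (a : A) (R p : Proc A) : (er a R p).size ≤ p.size := by
  induction p with
  | nil => exact le_rfl
  | pre b p ih =>
    rw [er]
    split
    · exact Nat.zero_le _
    · simp only [Proc.size]; omega
  | par p q ih1 ih2 => simp only [er, Proc.size]; omega
  | repl b p ih => simp only [er, Proc.size]; omega

theorem er_size_lt {A : Type} {a : A} {R p : Proc A} (h : Occ a R p) :
    (er a R p).size < p.size := by
  induction p with
  | nil => exact h.elim
  | pre b p ih =>
    rw [er]
    split
    · simp only [Proc.size]; omega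
    · rename_i hne
      rcases h with h | h
      · exact (hne h).elim
      · have := ih h
        simp only [Proc.size]; omega
  | par p q ih1 ih2 =>
    simp only [er, Proc.size]
    have h1 := er_size_le a R p
    have h2 := er_size_le a R q
    rcases h with h | h
    · have := ih1 h; omega
    · have := ih2 h; omega
  | repl b p ih =>
    have := ih h
    simp only [er, Proc.size]; omega

theorem er_of_not_occ {A : Type} {a : A} {R p : Proc A} (h : ¬ Occ a R p) : er a R p = p := by
  induction p with
  | nil => rfl
  | pre b p ih =>
    rw [er, if_neg (fun hh => h (Or.inl hh)), ih (fun hh => h (Or.inr hh))]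
  | par p q ih1 ih2 => rw [er, ih1 (fun hh => h (Or.inl hh)), ih2 (fun hh => h (Or.inr hh))]
  | repl b p ih => rw [er, ih h]

theorem er_self {A : Type} (a : A) (R : Proc A) : er a R R = R := by
  apply er_of_not_occ
  intro h
  have := h.size
  omega

theorem er_step {A : Type} {a : A} {R p p' : Proc A} {b : A} (h : Step p b p') :
    Step (er a R p) b (er a R p') ∨ (b = a ∧ mk (er a R p') = mk (er a R p) + mk R) := by
  induction h with
  | @pre c p =>
    by_cases hc : c = a ∧ p = R
    · obtain ⟨rfl, rfl⟩ := hc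
      right
      refine ⟨rfl, ?_⟩
      rw [er_self, er, if_pos ⟨rfl, rfl⟩, mk_nil, zero_add]
    · left
      rw [er, if_neg hc]
      exact Step.pre
  | repl => exact Or.inl Step.repl
  | parL q _ ih =>
    rcases ih with ih | ⟨rfl, ih⟩
    · exact Or.inl (Step.parL _ ih)
    · exact Or.inr ⟨rfl, by rw [er, er, mk_par, mk_par, ih, add_right_comm]⟩
  | parR q _ ih =>
    rcases ih with ih | ⟨rfl, ih⟩
    · exact Or.inl (Step.parR _ ih)
    · exact Or.inr ⟨rfl, by rw [er, er, mk_par, mk_par, ih, add_assoc]⟩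

theorem er_step_inv {A : Type} {a : A} {R p q : Proc A} {b : A} (h : Step (er a R p) b q) :
    ∃ p', Step p b p' ∧ er a R p' = q := by
  induction p generalizing q with
  | nil => cases h
  | pre c p _ =>
    rw [er] at h
    split at h
    · cases h
    · cases h
      exact ⟨p, Step.pre, rfl⟩
  | par p1 p2 ih1 ih2 =>
    rw [er] at h
    cases h with
    | parL _ h =>
      obtain ⟨p', h1, rfl⟩ := ih1 h
      exact ⟨_, Step.parL _ h1, rfl⟩
    | parR _ h =>
      obtain ⟨p', h1, rfl⟩ := ih2 h
      exact ⟨_, Step.parR _ h1, rfl⟩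
  | repl c p _ =>
    rw [er] at h
    cases h
    exact ⟨_, Step.repl, rfl⟩

theorem er_bisim {A : Type} (a : A) (R p : Proc A) :
    mk p + mk (Proc.repl a R) = mk (er a R p) + mk (Proc.repl a R) := by
  refine BP.coind (fun x y => ∃ p, x = mk p + mk (Proc.repl a R) ∧
    y = mk (er a R p) + mk (Proc.repl a R)) ?_ ?_ ⟨p, rfl, rfl⟩
  · rintro _ _ ⟨p, rfl, rfl⟩ b z hs
    have hh := bstep_add.1 hs
    clear hs
    rcases hh with ⟨x', hs, rfl⟩ | ⟨y', hs, rfl⟩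
    · obtain ⟨p', hp, rfl⟩ := bstep_mk.1 hs
      rcases er_step (a := a) (R := R) hp with h | ⟨rfl, h⟩
      · exact ⟨_, (BStep.of h).left _, Or.inl ⟨p', rfl, rfl⟩⟩
      · refine ⟨_, (bstep_mk_repl.2 ⟨rfl, rfl⟩ : BStep (mk (Proc.repl b R)) b _).right _,
          Or.inl ⟨p', rfl, ?_⟩⟩
        rw [h, add_assoc, add_comm (mk R)]
    · obtain ⟨rfl, rfl⟩ := bstep_mk_repl.1 hs
      refine ⟨_, (bstep_mk_repl.2 ⟨rfl, rfl⟩ : BStep (mk (Proc.repl b R)) b _).right _,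
          Or.inl ⟨Proc.par p R, ?_, ?_⟩⟩
      · rw [mk_par, add_assoc, add_comm (mk R)]
      · rw [er, er_self, mk_par, add_assoc, add_comm (mk R)]
  · rintro _ _ ⟨p, rfl, rfl⟩ b z hs
    have hh := bstep_add.1 hs
    clear hs
    rcases hh with ⟨x', hs, rfl⟩ | ⟨y', hs, rfl⟩
    · obtain ⟨q, hp, rfl⟩ := bstep_mk.1 hs
      obtain ⟨p', hp', rfl⟩ := er_step_inv hp
      exact ⟨_, (BStep.of hp').left _, Or.inl ⟨p', rfl, rfl⟩⟩
    · obtain ⟨rfl, rfl⟩ := bstep_mk_repl.1 hs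
      refine ⟨_, (bstep_mk_repl.2 ⟨rfl, rfl⟩ : BStep (mk (Proc.repl b R)) b _).right _,
          Or.inl ⟨Proc.par p R, ?_, ?_⟩⟩
      · rw [mk_par, add_assoc, add_comm (mk R)]
      · rw [er, er_self, mk_par, add_assoc, add_comm (mk R)]

/-- Replacing the body of a replicated component. -/
theorem repl_replace {A : Type} {S0 G R : Proc A} {a : A} (hS : ReplOnly S0)
    (h : mk S0 + mk (Proc.repl a G) + mk G = mk S0 + mk (Proc.repl a G) + mk R) :
    mk S0 + mk (Proc.repl a G) = mk S0 + mk (Proc.repl a R) := by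
  have key : ∀ w : BP A, mk S0 + mk (Proc.repl a G) + w = mk S0 + mk (Proc.repl a R) + w := by
    intro w
    refine BP.coind (fun x y => ∃ w, x = mk S0 + mk (Proc.repl a G) + w ∧
      y = mk S0 + mk (Proc.repl a R) + w) ?_ ?_ ⟨w, rfl, rfl⟩
    · rintro _ _ ⟨w, rfl, rfl⟩ b z hs
      have hh := bstep_add.1 hs
      clear hs
      rcases hh with ⟨x', hs, rfl⟩ | ⟨y', hs, rfl⟩
      · have hh := bstep_add.1 hs
        clear hs
        rcases hh with ⟨x', hs, rfl⟩ | ⟨y', hs, rfl⟩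
        · obtain ⟨K, _, rfl⟩ := replOnly_step hS hs
          exact ⟨_, (hs.left _).left _, Or.inl ⟨mk K + w, by abel, by abel⟩⟩
        · obtain ⟨rfl, rfl⟩ := bstep_mk_repl.1 hs
          refine ⟨_, ((bstep_mk_repl.2 ⟨rfl, rfl⟩ : BStep (mk (Proc.repl b R)) b _).right _).left _,
            Or.inl ⟨mk R + w, ?_, by abel⟩⟩
          rw [← add_assoc, ← add_assoc, h]
      · exact ⟨_, hs.right _, Or.inl ⟨y', rfl, rfl⟩⟩
    · rintro _ _ ⟨w, rfl, rfl⟩ b z hs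
      have hh := bstep_add.1 hs
      clear hs
      rcases hh with ⟨x', hs, rfl⟩ | ⟨y', hs, rfl⟩
      · have hh := bstep_add.1 hs
        clear hs
        rcases hh with ⟨x', hs, rfl⟩ | ⟨y', hs, rfl⟩
        · obtain ⟨K, _, rfl⟩ := replOnly_step hS hs
          exact ⟨_, (hs.left _).left _, Or.inl ⟨mk K + w, by abel, by abel⟩⟩
        · obtain ⟨rfl, rfl⟩ := bstep_mk_repl.1 hs
          refine ⟨_, ((bstep_mk_repl.2 ⟨rfl, rfl⟩ : BStep (mk (Proc.repl b G)) b _).right _).left _,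
            Or.inl ⟨mk R + w, ?_, by abel⟩⟩
          rw [← add_assoc, ← add_assoc, h]
      · exact ⟨_, hs.right _, Or.inl ⟨y', rfl, rfl⟩⟩
  simpa using key 0

/-! ### Absorption of components -/

theorem repl_absorb {A : Type} (a : A) (p : Proc A) :
    mk (Proc.repl a p) + mk (Proc.pre a p) = mk (Proc.repl a p) := by
  refine BP.coind (fun x y => ∃ w, x = mk (Proc.repl a p) + mk (Proc.pre a p) + w ∧
    y = mk (Proc.repl a p) + w) ?_ ?_ ⟨0, by rw [add_zero], by rw [add_zero]⟩
  · rintro _ _ ⟨w, rfl, rfl⟩ b z hs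
    have hh := bstep_add.1 hs
    clear hs
    rcases hh with ⟨x', hs, rfl⟩ | ⟨y', hs, rfl⟩
    · have hh := bstep_add.1 hs
      clear hs
      rcases hh with ⟨x', hs, rfl⟩ | ⟨y', hs, rfl⟩
      · obtain ⟨rfl, rfl⟩ := bstep_mk_repl.1 hs
        exact ⟨_, hs.left _, Or.inl ⟨mk p + w, by abel, by abel⟩⟩
      · obtain ⟨rfl, rfl⟩ := bstep_mk_pre.1 hs
        exact ⟨_, (bstep_mk_repl.2 ⟨rfl, rfl⟩ : BStep (mk (Proc.repl b p)) b _).left _,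
          Or.inr rfl⟩
    · exact ⟨_, hs.right _, Or.inl ⟨y', rfl, rfl⟩⟩
  · rintro _ _ ⟨w, rfl, rfl⟩ b z hs
    have hh := bstep_add.1 hs
    clear hs
    rcases hh with ⟨x', hs, rfl⟩ | ⟨y', hs, rfl⟩
    · obtain ⟨rfl, rfl⟩ := bstep_mk_repl.1 hs
      exact ⟨_, (hs.left _).left _, Or.inl ⟨mk p + w, by abel, by abel⟩⟩
    · exact ⟨_, hs.right _, Or.inl ⟨y', rfl, rfl⟩⟩

theorem bang_absorb {A : Type} {Q : Proc A} (hQ : Q.IsFin) :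
    mk (Proc.bang Q) + mk Q = mk (Proc.bang Q) := by
  induction Q with
  | nil => rw [mk_nil, add_zero]
  | pre a p _ => exact repl_absorb a p
  | repl a p _ => exact hQ.elim
  | par p q ih1 ih2 =>
    rw [Proc.bang, mk_par, mk_par, add_add_add_comm, ih1 hQ.1, ih2 hQ.2]

theorem bang_step {A : Type} {Q : Proc A} (hQ : Q.IsFin) {a : A} {z : BP A}
    (h : BStep (mk (Proc.bang Q)) a z) :
    ∃ y, BStep (mk Q) a y ∧ z = mk (Proc.bang Q) + y := by
  induction Q generalizing z with
  | nil => exact (bstep_zero h).elim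
  | pre b p _ =>
    obtain ⟨rfl, rfl⟩ := bstep_mk_repl.1 h
    exact ⟨mk p, bstep_mk_pre.2 ⟨rfl, rfl⟩, rfl⟩
  | repl b p _ => exact hQ.elim
  | par p q ih1 ih2 =>
    rw [Proc.bang, mk_par] at h
    rcases bstep_add.1 h with ⟨x', hs, rfl⟩ | ⟨y', hs, rfl⟩
    · obtain ⟨y, hy, rfl⟩ := ih1 hQ.1 hs
      refine ⟨_, hy.left (mk q), ?_⟩
      rw [Proc.bang, mk_par, add_add_add_comm, bang_absorb hQ.2]
    · obtain ⟨y, hy, rfl⟩ := ih2 hQ.2 hs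
      refine ⟨_, hy.right (mk p), ?_⟩
      rw [Proc.bang, mk_par, add_add_add_comm, bang_absorb hQ.1]

theorem absorb_bang {A : Type} {S Q : Proc A} (hS : ReplOnly S) (hQ : Q.IsFin)
    (h : mk S + mk Q = mk S) : mk S + mk (Proc.bang Q) = mk S := by
  refine BP.coind (fun x y => ∃ w, x = mk S + mk (Proc.bang Q) + w ∧ y = mk S + w)
    ?_ ?_ ⟨0, by rw [add_zero], by rw [add_zero]⟩
  · rintro _ _ ⟨w, rfl, rfl⟩ b z hs
    have hh := bstep_add.1 hs
    clear hs
    rcases hh with ⟨x', hs, rfl⟩ | ⟨y', hs, rfl⟩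
    · have hh := bstep_add.1 hs
      clear hs
      rcases hh with ⟨x', hs, rfl⟩ | ⟨y', hs, rfl⟩
      · obtain ⟨K, _, rfl⟩ := replOnly_step hS hs
        exact ⟨_, hs.left _, Or.inl ⟨mk K + w, by abel, by abel⟩⟩
      · obtain ⟨y, hy, rfl⟩ := bang_step hQ hs
        refine ⟨mk S + (y + w), ?_, Or.inl ⟨y + w, by abel, rfl⟩⟩
        have h1 := (hy.right (mk S)).left w
        rw [h, add_assoc] at h1
        exact h1
    · exact ⟨_, hs.right _, Or.inl ⟨y', rfl, rfl⟩⟩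
  · rintro _ _ ⟨w, rfl, rfl⟩ b z hs
    have hh := bstep_add.1 hs
    clear hs
    rcases hh with ⟨x', hs, rfl⟩ | ⟨y', hs, rfl⟩
    · obtain ⟨K, _, rfl⟩ := replOnly_step hS hs
      exact ⟨_, (hs.left _).left _, Or.inl ⟨mk K + w, by abel, by abel⟩⟩
    · exact ⟨_, hs.right _, Or.inl ⟨y', rfl, rfl⟩⟩

theorem absorb_component {A : Type} {S Q Q' : Proc A} (hS : ReplOnly S) (hQ : Q.IsFin)
    (hQ' : Q'.IsFin) (h : mk S + (mk Q + mk Q') = mk S) : mk S + mk Q = mk S := by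
  have h1 := absorb_bang (Q := Proc.par Q Q') hS ⟨hQ, hQ'⟩ h
  rw [Proc.bang, mk_par] at h1
  calc mk S + mk Q = mk S + (mk (Proc.bang Q) + mk (Proc.bang Q')) + mk Q := by rw [h1]
    _ = mk S + (mk (Proc.bang Q) + mk Q + mk (Proc.bang Q')) := by abel
    _ = mk S := by rw [bang_absorb hQ, h1]

/-! ### Cancellation -/

theorem Good.par {A : Type} {S T U : Proc A} (hT : Good S T) (hU : Good S U) :
    Good S (Proc.par T U) :=
  ⟨⟨hT.1, hU.1⟩, fun a F h => h.elim (hT.2 a F) (hU.2 a F)⟩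

theorem Good.step {A : Type} {S T T' : Proc A} {a : A} (hT : Good S T) (h : Step T a T') :
    Good S T' := ⟨(h.fin hT.1).1, fun b F ho => hT.2 b F (h.occ ho)⟩

theorem run_match {A : Type} {S : Proc A} (hS : ReplOnly S) (n : ℕ) :
    ∀ F T U : Proc A, F.IsFin → F.size = n → Good S T → U.IsFin →
      mk S + mk F = mk S + (mk T + mk U) →
      ∃ T', Good S T' ∧ mk S + mk T' = mk S ∧ T.size ≤ T'.size + n ∧ T'.size ≤ T.size := by
  induction n with
  | zero =>
    intro F T U hF hn hT hU h
    rw [mk_of_size_zero hF hn, add_zero] at h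
    exact ⟨T, hT, absorb_component hS hT.1 hU h.symm, le_rfl, le_rfl⟩
  | succ n ih =>
    intro F T U hF hn hT hU h
    obtain ⟨a, F', hs⟩ := exists_step hF (by omega)
    have hF' := hs.fin hF
    have h1 := (BStep.of hs).right (mk S)
    rw [h] at h1
    rcases bstep_add.1 h1 with ⟨x', h2, he⟩ | ⟨y', h2, he⟩
    · obtain ⟨G, hG, rfl⟩ := replOnly_step hS h2
      obtain ⟨T', a1, a2, a3, a4⟩ := ih F' T (Proc.par G U) hF'.1 (by omega) hT
        ⟨(hG.good hS).1, hU⟩ (by rw [he, mk_par]; abel)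
      exact ⟨T', a1, a2, by omega, a4⟩
    · rcases bstep_add.1 h2 with ⟨x', h3, rfl⟩ | ⟨y', h3, rfl⟩
      · obtain ⟨T1, hs1, rfl⟩ := bstep_mk.1 h3
        have hT1 := hs1.fin hT.1
        obtain ⟨T', a1, a2, a3, a4⟩ := ih F' T1 U hF'.1 (by omega) (hT.step hs1) hU he
        exact ⟨T', a1, a2, by omega, by omega⟩
      · obtain ⟨U1, hs1, rfl⟩ := bstep_mk.1 h3
        obtain ⟨T', a1, a2, a3, a4⟩ := ih F' T U1 hF'.1 (by omega) hT (hs1.fin hU).1 he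
        exact ⟨T', a1, a2, by omega, a4⟩

theorem exists_component {A : Type} {T : Proc A} (hT : T.IsFin) (h : T.size ≠ 0) :
    ∃ a R U, Occ a R T ∧ R.IsFin ∧ U.IsFin ∧ mk T = mk (Proc.pre a R) + mk U ∧
      ∀ b F, Occ b F R → Occ b F T := by
  induction T with
  | nil => exact (h rfl).elim
  | pre a p _ =>
    exact ⟨a, p, Proc.nil, Or.inl ⟨rfl, rfl⟩, hT, trivial, by rw [mk_nil, add_zero],
      fun _ _ h => Or.inr h⟩
  | repl a p _ => exact hT.elim
  | par p q ih1 ih2 =>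
    by_cases h1 : p.size = 0
    · have h2 : q.size ≠ 0 := by
        simp only [Proc.size] at h; omega
      obtain ⟨a, R, U, a1, a2, a3, a4, a5⟩ := ih2 hT.2 h2
      exact ⟨a, R, Proc.par p U, Or.inr a1, a2, ⟨hT.1, a3⟩,
        by rw [mk_par, mk_par, a4, add_left_comm], fun b F h => Or.inr (a5 b F h)⟩
    · obtain ⟨a, R, U, a1, a2, a3, a4, a5⟩ := ih1 hT.1 h1
      exact ⟨a, R, Proc.par U q, Or.inl a1, a2, ⟨a3, hT.2⟩,
        by rw [mk_par, mk_par, a4, add_assoc], fun b F h => Or.inl (a5 b F h)⟩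

theorem seed_no_absorb {A : Type} {S : Proc A} (hS : ReplOnly S) (hseed : IsSeed S) (n : ℕ) :
    ∀ T : Proc A, Good S T → T.size = n → mk S + mk T = mk S → T.size = 0 := by
  induction n using Nat.strong_induction_on with
  | _ n IH =>
    intro T hT hn h
    by_contra hne
    obtain ⟨a, R, U, hocc, hR, hU, hmk, hsub⟩ := exists_component hT.1 hne
    rw [hmk] at h
    have h1 : mk S + mk (Proc.pre a R) = mk S :=
      absorb_component (Q := Proc.pre a R) hS hR hU h
    have hRS : Good S R := ⟨hR, fun b F ho => hT.2 b F (hsub b F ho)⟩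
    have hoccS : Occ a R S := hT.2 a R hocc
    have h2 : BStep (mk S) a (mk S + mk R) := by
      have := (bstep_mk_pre.2 ⟨rfl, rfl⟩ : BStep (mk (Proc.pre a R)) a (mk R)).right (mk S)
      rwa [h1] at this
    obtain ⟨G, hG, he⟩ := replOnly_step hS h2
    have hGS := hG.good hS
    have hRT := hocc.size
    by_cases hsz : R.size ≤ G.size
    · obtain ⟨S0, b1, b2, b3, b4⟩ := hG.split hS
      have e1 : mk S = mk S0 + mk (Proc.repl a R) := by
        rw [b2]
        apply repl_replace b1
        rw [← b2, he]
      rcases b4 a R hoccS with ho | ho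
      · have e2 := er_bisim a R S0
        rw [← e1] at e2
        have := hseed.2 (Proc.par (er a R S0) (Proc.repl a R))
          ⟨(er_replOnly a R b1).wf, hR⟩ (mk_eq.1 e2.symm)
        have hlt := er_size_lt ho
        simp only [Proc.size] at this
        omega
      · have := hseed.2 (Proc.par S0 (Proc.repl a R)) ⟨b1.wf, hR⟩ (mk_eq.1 e1.symm)
        have hlt := ho.size
        simp only [Proc.size] at this
        omega
    · obtain ⟨T', a1, a2, a3, a4⟩ := run_match hS G.size G R Proc.nil hGS.1 rfl hRS trivial
        (by rw [mk_nil, add_zero, he])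
      have := IH T'.size (by omega) T' a1 rfl a2
      omega

theorem cancel_size {A : Type} {S : Proc A} (hS : ReplOnly S) (hseed : IsSeed S)
    {T₁ T₂ : Proc A} (h1 : Good S T₁) (h2 : Good S T₂) (h : mk S + mk T₁ = mk S + mk T₂) :
    T₂.size ≤ T₁.size := by
  obtain ⟨T', a1, a2, a3, a4⟩ := run_match hS T₁.size T₁ T₂ Proc.nil h1.1 rfl h2 trivial
    (by rw [mk_nil, add_zero, h])
  have := seed_no_absorb hS hseed _ T' a1 rfl a2
  omega

theorem cancel_good {A : Type} {S : Proc A} (hS : ReplOnly S) (hseed : IsSeed S)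
    {T₁ T₂ : Proc A} (h1 : Good S T₁) (h2 : Good S T₂) (h : mk S + mk T₁ = mk S + mk T₂) :
    mk T₁ = mk T₂ := by
  have key : ∀ T₁ T₂ : Proc A, Good S T₁ → Good S T₂ → mk S + mk T₁ = mk S + mk T₂ →
      ∀ a T₁', Step T₁ a T₁' → ∃ T₂', Step T₂ a T₂' ∧ Good S T₁' ∧ Good S T₂' ∧
        mk S + mk T₁' = mk S + mk T₂' := by
    intro T₁ T₂ h1 h2 h a T₁' hs
    have hst := (BStep.of hs).right (mk S)
    rw [h] at hst
    rcases bstep_add.1 hst with ⟨x', h3, he⟩ | ⟨y', h3, he⟩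
    · obtain ⟨G, hG, rfl⟩ := replOnly_step hS h3
      have c1 := cancel_size hS hseed (h1.step hs) ((hG.good hS).par h2)
        (by rw [he, mk_par, add_assoc])
      have c2 := cancel_size hS hseed h2 h1 h.symm
      have c3 := (hs.fin h1.1).2
      simp only [Proc.size] at c1
      omega
    · obtain ⟨T₂', hs2, rfl⟩ := bstep_mk.1 h3
      exact ⟨T₂', hs2, h1.step hs, h2.step hs2, he⟩
  refine mk_eq.2 (Bisim.coind (fun T₁ T₂ => Good S T₁ ∧ Good S T₂ ∧
    mk S + mk T₁ = mk S + mk T₂) ?_ ?_ ⟨h1, h2, h⟩)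
  · rintro T₁ T₂ ⟨h1, h2, h⟩ a T₁' hs
    exact key T₁ T₂ h1 h2 h a T₁' hs
  · rintro T₁ T₂ ⟨h1, h2, h⟩ a T₂' hs
    obtain ⟨T₁', b1, b2, b3, b4⟩ := key T₂ T₁ h2 h1 h.symm a T₂' hs
    exact ⟨T₁', b1, b3, b2, b4.symm⟩

end CCS

/-- If `S | R₁ ~ S | R₂` and `S ▷ Rᵢ` (`i = 1,2`), then `R₁ ≡D R₂`. -/
theorem cancel_R_R {A : Type} [Countable A]
    (S R₁ R₂ : CCS.Proc A) (hS : CCS.ReplOnly S) (hseed : CCS.IsSeed S)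
    (hR₁ : R₁.IsFin) (hR₂ : R₂.IsFin)
    (h : CCS.Bisim (CCS.Proc.par S R₁) (CCS.Proc.par S R₂))
    (hp₁ : CCS.Purg S R₁) (hp₂ : CCS.Purg S R₂) :
    CCS.EqD R₁ R₂ := by
  obtain ⟨T₁, hT₁, e₁⟩ := CCS.purg_good hS hseed.1 hR₁ hp₁
  obtain ⟨T₂, hT₂, e₂⟩ := CCS.purg_good hS hseed.1 hR₂ hp₂
  have h' : CCS.mk S + CCS.mk T₁ = CCS.mk S + CCS.mk T₂ := by
    rw [← e₁.sound, ← e₂.sound]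
    exact CCS.mk_eq.2 h
  exact e₁.trans ((CCS.fin_complete hT₁.1 hT₂.1
    (CCS.cancel_good hS hseed hT₁ hT₂ h')).trans e₂.symm)
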